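/- arXiv:1906.10494 — 2 statements merged into one kernel-verified Lean document; each statement's English description precedes it below -/
import Mathlib

section
/- SCC dichotomy: there exists a polynomial q with natural-number coefficients such that for every 2-VASS V with n control states and norm M, every strongly connected component S of V satisfies at least one of: (a) every control state in S lies on a cycle within S whose effect is positive and whose length is at most q(nM); or (b) there exists a closed half-plane H ⊆ ℚ² containing no positive vector such that the effect of every cycle within S belongs to H. -/
/-- Integer vectors in the plane. -/
abbrev Vec2 : Type := ℤ × ℤ

/-- The norm of a vector: the maximum of the absolute values of its coordinates. -/
def vnorm (v : Vec2) : ℕ := max v.1.natAbs v.2.natAbs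

/-- A vector is positive if both coordinates are positive. -/
def Pos (v : Vec2) : Prop := 0 < v.1 ∧ 0 < v.2

/-- A vector is semi-positive if both coordinates are nonnegative and one is positive. -/
def SemiPos (v : Vec2) : Prop := 0 ≤ v.1 ∧ 0 ≤ v.2 ∧ (0 < v.1 ∨ 0 < v.2)

/-- A vector is vertical if it is of the form (0, a) with a > 0. -/
def Vert (v : Vec2) : Prop := v.1 = 0 ∧ 0 < v.2

/-- A vector is horizontal if it is of the form (a, 0) with a > 0. -/
def Horiz (v : Vec2) : Prop := 0 < v.1 ∧ v.2 = 0

/-- Embedding of integer vectors into the rational plane. -/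
def toQ (v : Vec2) : ℚ × ℚ := ((v.1 : ℚ), (v.2 : ℚ))

/-- The half-line (ray) ℚ≥0 · x generated by a rational vector x. -/
def rayQ (x : ℚ × ℚ) : Set (ℚ × ℚ) := {z | ∃ a : ℚ, 0 ≤ a ∧ z = a • x}

/-- The cone of a finite list of integer vectors: all nonnegative rational
linear combinations. -/
def Cone (vs : List Vec2) : Set (ℚ × ℚ) :=
  {x | ∃ a : Fin vs.length → ℚ, (∀ i, 0 ≤ a i) ∧ x = ∑ i, a i • toQ (vs.get i)}

/-- The sequential cone: nonnegative rational combinations all of whose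
partial sums are in the nonnegative orthant. -/
def SeqCone (vs : List Vec2) : Set (ℚ × ℚ) :=
  {x | ∃ a : Fin vs.length → ℚ, (∀ i, 0 ≤ a i) ∧
    (∀ k : ℕ, k ≤ vs.length →
      0 ≤ ∑ i : Fin vs.length, if (i : ℕ) < k then a i • toQ (vs.get i) else 0) ∧
    x = ∑ i, a i • toQ (vs.get i)}

/-- Two integer vectors are colinear if they generate the same half-line. -/
def Colinear (v w : Vec2) : Prop := rayQ (toQ v) = rayQ (toQ w)

/-- The clockwise relation on nonnegative vectors:
`Clk v u` iff u lies strictly clockwise from v. -/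
def Clk (v u : Vec2) : Prop := 0 < v.2 * u.1 - v.1 * u.2

/-- Projection of a vector on coordinate `j` (`Fin 2` indexes the two coordinates). -/
def proj (j : Fin 2) (v : Vec2) : ℤ := if j = 0 then v.1 else v.2

/-! ### 2-dimensional vector addition systems with states (2-VASS) -/

/-- A transition of a 2-VASS with control states `Fin n`:
a source state, an effect vector, and a target state. -/
abbrev Transition (n : ℕ) : Type := Fin n × Vec2 × Fin n

/-- A 2-VASS with control states `Fin n` is a finite set of transitions. -/
abbrev VASS (n : ℕ) : Type := Finset (Transition n)

/-- The norm of a 2-VASS: the largest norm of an effect of a transition. -/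
def vassNorm {n : ℕ} (V : VASS n) : ℕ := V.sup (fun t => vnorm t.2.1)

/-- The effect of a sequence of transitions: the sum of the individual effects. -/
def effect {n : ℕ} (π : List (Transition n)) : Vec2 := (π.map (fun t => t.2.1)).sum

/-- A path of `V`: a sequence of transitions of `V` in which
consecutive control states match. -/
def IsPath {n : ℕ} (V : VASS n) (π : List (Transition n)) : Prop :=
  (∀ t ∈ π, t ∈ V) ∧ π.Chain' (fun s t => s.2.2 = t.1)

/-- The path `π` starts at control state `q` (vacuously true for the empty path). -/
def startsAt {n : ℕ} (π : List (Transition n)) (q : Fin n) : Prop :=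
  ∀ t ∈ π.head?, t.1 = q

/-- The control state after the first `i` transitions of `π`, for a path
starting at control state `q`. -/
def stateAt {n : ℕ} (π : List (Transition n)) (q : Fin n) (i : ℕ) : Fin n :=
  (((π.take i).getLast?).map (fun t => t.2.2)).getD q

/-- The final control state of a path `π` starting at control state `q`. -/
def endState {n : ℕ} (π : List (Transition n)) (q : Fin n) : Fin n := stateAt π q π.length

/-- The counter values after the first `i` transitions of `π`, starting from
counter values `u`. -/
def vecAt {n : ℕ} (π : List (Transition n)) (u : Vec2) (i : ℕ) : Vec2 :=
  u + effect (π.take i)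

/-- The path `π` is enabled in the configuration `(q, u)`: it starts at `q`
and all intermediate counter values are nonnegative. -/
def Enabled {n : ℕ} (π : List (Transition n)) (q : Fin n) (u : Vec2) : Prop :=
  startsAt π q ∧ ∀ i ≤ π.length, 0 ≤ vecAt π u i

/-- For `j ∈ {1,2}`, the path `π` is `{j}`-enabled in the configuration `(q, u)`:
it starts at `q` and the `j`-th coordinate of all intermediate counter values is
nonnegative. -/
def JEnabled {n : ℕ} (π : List (Transition n)) (q : Fin n) (u : Vec2) (j : Fin 2) : Prop :=
  startsAt π q ∧ ∀ i ≤ π.length, 0 ≤ proj j (vecAt π u i)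

/-- A run of `V`: a path of `V` enabled in the configuration `(q, u)`.
Its source is `(q, u)`, its target is `(endState π q, vecAt π u π.length)`,
and its configurations are `(stateAt π q i, vecAt π u i)` for `i ≤ π.length`. -/
def IsRun {n : ℕ} (V : VASS n) (π : List (Transition n)) (q : Fin n) (u : Vec2) : Prop :=
  IsPath V π ∧ Enabled π q u

/-- A (0,0)-run of `V`: a run whose source and target counter values are `(0,0)`. -/
def IsZeroRun {n : ℕ} (V : VASS n) (π : List (Transition n)) (q : Fin n) : Prop :=
  IsRun V π q 0 ∧ effect π = 0

/-- A cycle of `V`: a nonempty path of `V` whose starting and ending control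
states coincide. -/
def IsCycle {n : ℕ} (V : VASS n) (γ : List (Transition n)) : Prop :=
  IsPath V γ ∧ γ ≠ [] ∧ γ.head?.map (fun t => t.1) = γ.getLast?.map (fun t => t.2.2)

/-- Reachability in the directed graph of `V`: there is a path of `V`
from `p` to `q` (possibly empty). -/
def Reach {n : ℕ} (V : VASS n) (p q : Fin n) : Prop :=
  ∃ π : List (Transition n), IsPath V π ∧ startsAt π p ∧ endState π p = q

/-- `S` is a strongly connected component of the directed graph of `V`:
it is nonempty, all its states are mutually reachable, and it is maximal
with this property. -/
def IsSCC {n : ℕ} (V : VASS n) (S : Set (Fin n)) : Prop :=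
  S.Nonempty ∧ (∀ p ∈ S, ∀ q ∈ S, Reach V p q) ∧
  (∀ p ∈ S, ∀ q : Fin n, Reach V p q → Reach V q p → q ∈ S)

/-- All control states occurring in the sequence of transitions `γ` belong to `S`. -/
def WithinS {n : ℕ} (S : Set (Fin n)) (γ : List (Transition n)) : Prop :=
  ∀ t ∈ γ, t.1 ∈ S ∧ t.2.2 ∈ S

/-- `Walk V S p π q`: `π` is a path of `V` from `p` to `q` all of whose transitions
stay within `S`. -/
def Walk {n : ℕ} (V : VASS n) (S : Set (Fin n)) :
    Fin n → List (Transition n) → Fin n → Prop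
  | p, [], q => p = q
  | p, t :: π, q => t ∈ V ∧ t.1 = p ∧ t.1 ∈ S ∧ t.2.2 ∈ S ∧ Walk V S t.2.2 π q

theorem effect_append {n : ℕ} (π ρ : List (Transition n)) :
    effect (π ++ ρ) = effect π + effect ρ := by
  simp [effect]

theorem effect_flatten_replicate {n : ℕ} (k : ℕ) (π : List (Transition n)) :
    effect (List.replicate k π).flatten = k • effect π := by
  induction k with
  | zero => simp [effect]
  | succ k ih =>
    rw [List.replicate_succ, List.flatten_cons, effect_append, ih, succ_nsmul, add_comm]

namespace Walk

variable {n : ℕ} {V : VASS n} {S : Set (Fin n)}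

theorem append_iff {π ρ : List (Transition n)} {p q : Fin n} :
    Walk V S p (π ++ ρ) q ↔ ∃ r, Walk V S p π r ∧ Walk V S r ρ q := by
  induction π generalizing p with
  | nil => simp [Walk]
  | cons t π ih =>
    simp only [List.cons_append, Walk, ih]
    grind

theorem append {π ρ : List (Transition n)} {p q r : Fin n}
    (h : Walk V S p π r) (h' : Walk V S r ρ q) : Walk V S p (π ++ ρ) q :=
  append_iff.2 ⟨r, h, h'⟩

theorem endpoint_unique {π : List (Transition n)} {p q r : Fin n}
    (h : Walk V S p π q) (h' : Walk V S p π r) : q = r := by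
  induction π generalizing p with
  | nil => exact Eq.trans (Eq.symm h) h'
  | cons t π ih => exact ih h.2.2.2.2 h'.2.2.2.2

theorem flatten_replicate {π : List (Transition n)} {p : Fin n}
    (h : Walk V S p π p) (k : ℕ) : Walk V S p (List.replicate k π).flatten p := by
  induction k with
  | zero => simp [Walk]
  | succ k ih =>
    rw [List.replicate_succ, List.flatten_cons]
    exact h.append ih

theorem mem_of_ne_nil {π : List (Transition n)} {p q : Fin n} (h : Walk V S p π q)
    (hπ : π ≠ []) : p ∈ S := by
  cases π with
  | nil => exact absurd rfl hπ
  | cons t π => exact h.2.1 ▸ h.2.2.1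

theorem iff_isPath {π : List (Transition n)} {p q : Fin n} :
    Walk V S p π q ↔ IsPath V π ∧ WithinS S π ∧ startsAt π p ∧ endState π p = q := by
  induction π generalizing p with
  | nil => simp [Walk, IsPath, WithinS, startsAt, endState, stateAt, List.Chain']
  | cons t π ih =>
    have hend : endState (t :: π) p = endState π t.2.2 := by
      simp only [endState, stateAt, List.take_length, List.getLast?_cons]
      cases π.getLast? <;> simp
    have hpath : IsPath V (t :: π) ↔ t ∈ V ∧ startsAt π t.2.2 ∧ IsPath V π := by
      simp only [IsPath, startsAt, List.Chain', List.forall_mem_cons, List.isChain_cons,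
        eq_comm (a := t.2.2)]
      tauto
    have hS : WithinS S (t :: π) ↔ (t.1 ∈ S ∧ t.2.2 ∈ S) ∧ WithinS S π := by
      simp only [WithinS, List.forall_mem_cons]
    have hst : startsAt (t :: π) p ↔ t.1 = p := by simp [startsAt]
    rw [Walk, ih, hend, hpath, hS, hst]
    tauto

theorem abs_effect_le {π : List (Transition n)} {p q : Fin n} (h : Walk V S p π q) :
    |(effect π).1| ≤ π.length * vassNorm V ∧ |(effect π).2| ≤ π.length * vassNorm V := by
  induction π generalizing p with
  | nil => simp [effect]
  | cons t π ih =>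
    obtain ⟨hV, -, -, -, hw⟩ := h
    obtain ⟨h1, h2⟩ := ih hw
    have hM : vnorm t.2.1 ≤ vassNorm V :=
      Finset.le_sup (f := fun t : Transition n => vnorm t.2.1) hV
    rw [vnorm, max_le_iff] at hM
    obtain ⟨hM1, hM2⟩ := hM
    have e : effect (t :: π) = t.2.1 + effect π := by simp [effect]
    rw [e, Prod.fst_add, Prod.snd_add, List.length_cons]
    push_cast
    have a1 : |t.2.1.1| ≤ (vassNorm V : ℤ) := by rw [Int.abs_eq_natAbs]; exact_mod_cast hM1
    have a2 : |t.2.1.2| ≤ (vassNorm V : ℤ) := by rw [Int.abs_eq_natAbs]; exact_mod_cast hM2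
    exact ⟨by linarith [abs_add_le t.2.1.1 (effect π).1],
      by linarith [abs_add_le t.2.1.2 (effect π).2]⟩

/-- A walk of length at least `n` contains a nonempty cycle of length at most `n`. -/
theorem exists_cycle_factor {π : List (Transition n)} {p q : Fin n} (h : Walk V S p π q)
    (hn : n ≤ π.length) :
    ∃ (r : Fin n) (a b c : List (Transition n)), π = a ++ b ++ c ∧ b ≠ [] ∧ b.length ≤ n ∧
      Walk V S p a r ∧ Walk V S r b r ∧ Walk V S r c q := by
  have hex : ∀ i : ℕ, ∃ r, Walk V S p (π.take i) r ∧ Walk V S r (π.drop i) q := fun i =>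
    append_iff.1 (by rwa [List.take_append_drop])
  choose r hr1 hr2 using hex
  obtain ⟨i, j, hij, hrij⟩ : ∃ i j : Fin (n + 1), i < j ∧ r i = r j := by
    obtain ⟨i, j, hne, he⟩ := Fintype.exists_ne_map_eq_of_card_lt
      (fun i : Fin (n + 1) => r i) (by simp)
    rcases lt_or_gt_of_ne hne with hlt | hlt
    · exact ⟨i, j, hlt, he⟩
    · exact ⟨j, i, hlt, he.symm⟩
  have hj : (j : ℕ) ≤ n := Nat.lt_succ_iff.1 j.2
  have hij' : (i : ℕ) < j := hij
  have hsplit : π.take j = π.take i ++ (π.take j).drop i := by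
    conv_lhs => rw [← List.take_append_drop i (π.take j)]
    rw [List.take_take, min_eq_left hij'.le]
  have hlen : ((π.take j).drop i).length = j - i := by
    rw [List.length_drop, List.length_take]
    omega
  refine ⟨r i, π.take i, (π.take j).drop i, π.drop j, ?_, ?_, ?_, hr1 i, ?_, hrij ▸ hr2 j⟩
  · rw [← hsplit, List.take_append_drop]
  · intro h0
    rw [h0, List.length_nil] at hlen
    omega
  · omega
  · have hw := hr1 j
    rw [hsplit] at hw
    obtain ⟨s, hs1, hs2⟩ := append_iff.1 hw
    rw [endpoint_unique hs1 (hr1 i), ← hrij] at hs2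
    exact hs2

theorem exists_short {π : List (Transition n)} {p q : Fin n} (h : Walk V S p π q) :
    ∃ ρ : List (Transition n), Walk V S p ρ q ∧ ρ.length ≤ n := by
  induction hk : π.length using Nat.strong_induction_on generalizing π with
  | _ k ih =>
    by_cases hn : n ≤ π.length
    · obtain ⟨r, a, b, c, rfl, hb, -, ha, -, hc⟩ := h.exists_cycle_factor hn
      have := List.length_pos_iff.2 hb
      refine ih (a ++ c).length ?_ (ha.append hc) rfl
      simp only [List.length_append] at hk ⊢
      omega
    · exact ⟨π, h, by omega⟩

/-- An additive functional that is nonpositive on all short cycles is nonpositive on all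
cycles. -/
theorem functional_effect_nonpos (L : Vec2 →+ ℤ)
    (hL : ∀ r γ, Walk V S r γ r → γ ≠ [] → γ.length ≤ n → L (effect γ) ≤ 0)
    {π : List (Transition n)} {p : Fin n} (h : Walk V S p π p) : L (effect π) ≤ 0 := by
  induction hk : π.length using Nat.strong_induction_on generalizing π with
  | _ k ih =>
    by_cases hn : n ≤ π.length
    · obtain ⟨r, a, b, c, rfl, hb, hbn, ha, hbw, hc⟩ := h.exists_cycle_factor hn
      have := List.length_pos_iff.2 hb
      have h1 := ih (a ++ c).length (by simp only [List.length_append] at hk ⊢; omega)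
        (ha.append hc) rfl
      have h2 := hL r b hbw hb hbn
      simp only [effect_append, map_add] at h1 ⊢
      linarith
    · by_cases h0 : π = []
      · simp [h0, effect]
      · exact hL p π h h0 (by omega)

theorem reach {π : List (Transition n)} {p q : Fin n} (h : Walk V S p π q) : Reach V p q :=
  let h' := iff_isPath.1 h
  ⟨π, h'.1, h'.2.2.1, h'.2.2.2⟩

end Walk

theorem Reach.exists_walk {n : ℕ} {V : VASS n} {p q : Fin n} (h : Reach V p q) :
    ∃ π, Walk V Set.univ p π q :=
  let ⟨π, h1, h2, h3⟩ := h
  ⟨π, Walk.iff_isPath.2 ⟨h1, fun _ _ => ⟨trivial, trivial⟩, h2, h3⟩⟩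

theorem Reach.trans {n : ℕ} {V : VASS n} {p q r : Fin n} (h : Reach V p q)
    (h' : Reach V q r) : Reach V p r :=
  let ⟨_, hπ⟩ := h.exists_walk
  let ⟨_, hρ⟩ := h'.exists_walk
  (hπ.append hρ).reach

theorem IsSCC.walk_within {n : ℕ} {V : VASS n} {S : Set (Fin n)} (hS : IsSCC V S)
    {π : List (Transition n)} {p q : Fin n} (hp : p ∈ S) (hq : q ∈ S)
    (h : Walk V Set.univ p π q) : Walk V S p π q := by
  induction π generalizing p with
  | nil => exact h
  | cons t π ih =>
    obtain ⟨hV, rfl, -, -, hw⟩ := h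
    have hstep : Walk V Set.univ t.1 [t] t.2.2 := ⟨hV, rfl, trivial, trivial, rfl⟩
    have ht : t.2.2 ∈ S :=
      hS.2.2 t.1 hp t.2.2 hstep.reach (hw.reach.trans (hS.2.1 q hq t.1 hp))
    exact ⟨hV, rfl, hp, ht, ih ht hw⟩

theorem IsSCC.exists_short_walk {n : ℕ} {V : VASS n} {S : Set (Fin n)} (hS : IsSCC V S)
    {p q : Fin n} (hp : p ∈ S) (hq : q ∈ S) :
    ∃ π, Walk V S p π q ∧ π.length ≤ n :=
  let ⟨_, hπ⟩ := (hS.2.1 p hp q hq).exists_walk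
  (hS.walk_within hp hq hπ).exists_short

theorem isCycle_iff_exists_walk {n : ℕ} {V : VASS n} {S : Set (Fin n)}
    {γ : List (Transition n)} :
    IsCycle V γ ∧ WithinS S γ ↔ γ ≠ [] ∧ ∃ p, Walk V S p γ p := by
  cases γ with
  | nil => simp [IsCycle]
  | cons t γ =>
    have hiff : ∀ p, Walk V S p (t :: γ) p ↔
        IsPath V (t :: γ) ∧ WithinS S (t :: γ) ∧ t.1 = p ∧
          (γ.getLast?.getD t).2.2 = p := by
      intro p
      rw [Walk.iff_isPath]
      simp [startsAt, endState, stateAt, List.getLast?_cons]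
    simp only [hiff, IsCycle, List.getLast?_cons, List.head?_cons, Option.map_some,
      Option.some.injEq]
    constructor
    · rintro ⟨⟨h1, h2, h3⟩, h4⟩
      exact ⟨h2, t.1, h1, h4, rfl, h3.symm⟩
    · rintro ⟨h2, p, h1, h4, h5, h6⟩
      exact ⟨⟨h1, h2, h5.trans h6.symm⟩, h4⟩

/-- A bounded set of integer vectors on which no nonzero nonnegative functional is nonpositive
has two elements with a small nonnegative combination that is positive. -/
theorem exists_pos_combination {E : Set Vec2} {N : ℕ}
    (hE : ∀ e ∈ E, |e.1| ≤ N ∧ |e.2| ≤ N)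
    (hL : ∀ a b : ℤ, 0 ≤ a → 0 ≤ b → 0 < a + b → ∃ e ∈ E, 0 < a * e.1 + b * e.2) :
    ∃ e ∈ E, ∃ f ∈ E, ∃ α β : ℕ, α ≤ 2 * N ∧ β ≤ 2 * N ∧ Pos (α • e + β • f) := by
  by_cases hpos : ∃ e ∈ E, Pos e
  · obtain ⟨e, he, hp⟩ := hpos
    have hN : 1 ≤ N := by
      have := (hE e he).1
      rw [abs_of_pos hp.1] at this
      have := hp.1
      omega
    exact ⟨e, he, e, he, 1, 0, by omega, by omega, by simpa using hp⟩
  · have hnp : ∀ e ∈ E, 0 < e.1 → e.2 ≤ 0 := fun e he h1 =>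
      not_lt.1 fun h2 => hpos ⟨e, he, h1, h2⟩
    have hfin : {e ∈ E | 0 < e.1}.Finite := by
      refine (Set.finite_Icc ((-N, -N) : Vec2) (N, N)).subset fun e he => ?_
      obtain ⟨h1, h2⟩ := hE e he.1
      rw [abs_le] at h1 h2
      exact ⟨⟨h1.1, h2.1⟩, ⟨h1.2, h2.2⟩⟩
    obtain ⟨e₀, he₀, hpos₀⟩ := hL 1 0 (by norm_num) le_rfl (by norm_num)
    obtain ⟨e, ⟨he, he1⟩, hmax⟩ := Set.exists_max_image _
      (fun e : Vec2 => (e.2 : ℚ) / e.1) hfin ⟨e₀, he₀, by simpa using hpos₀⟩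
    have he2 := hnp e he he1
    obtain ⟨f, hf, hD⟩ := hL (-e.2) e.1 (by omega) he1.le (by omega)
    have hf1 : f.1 ≤ 0 := by
      by_contra! hf1
      have hle := hmax f ⟨hf, hf1⟩
      rw [div_le_div_iff₀ (by exact_mod_cast hf1) (by exact_mod_cast he1)] at hle
      have hle' : f.2 * e.1 ≤ e.2 * f.1 := by exact_mod_cast hle
      linarith
    have hf2 : 0 < f.2 := by
      by_contra! hf2
      nlinarith [mul_nonneg_of_nonpos_of_nonpos he2 hf1,
        mul_nonpos_of_nonneg_of_nonpos he1.le hf2]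
    have hb1 := hE e he
    have hb2 := hE f hf
    simp only [abs_le] at hb1 hb2
    obtain ⟨α, hα⟩ := Int.eq_ofNat_of_zero_le (show 0 ≤ f.2 - f.1 by omega)
    obtain ⟨β, hβ⟩ := Int.eq_ofNat_of_zero_le (show 0 ≤ e.1 - e.2 by omega)
    refine ⟨e, he, f, hf, α, β, by omega, by omega, ?_⟩
    simp only [Pos, Prod.fst_add, Prod.snd_add, Prod.smul_fst, Prod.smul_snd]
    simp only [nsmul_eq_mul, ← hα, ← hβ]
    constructor <;> linarith

theorem IsSCC.exists_pos_cycle {n : ℕ} {V : VASS n} {S : Set (Fin n)} (hS : IsSCC V S)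
    (hL : ∀ a b : ℤ, 0 ≤ a → 0 ≤ b → 0 < a + b →
      ∃ r γ, Walk V S r γ r ∧ γ ≠ [] ∧ γ.length ≤ n ∧
        0 < a * (effect γ).1 + b * (effect γ).2)
    {p : Fin n} (hp : p ∈ S) :
    ∃ γ, Walk V S p γ p ∧ Pos (effect γ) ∧
      γ.length ≤ 3 * (n * vassNorm V) +
        4 * (n * vassNorm V) ^ 2 * (3 * (n * vassNorm V) + 1) := by
  have hbound : ∀ {r s : Fin n} {γ : List (Transition n)}, Walk V S r γ s → γ.length ≤ n →
      |(effect γ).1| ≤ (n * vassNorm V : ℕ) ∧ |(effect γ).2| ≤ (n * vassNorm V : ℕ) := by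
    intro r s γ hw hlen
    have hle : ((γ.length * vassNorm V : ℕ) : ℤ) ≤ (n * vassNorm V : ℕ) := by
      exact_mod_cast Nat.mul_le_mul_right _ hlen
    push_cast at hle ⊢
    exact ⟨hw.abs_effect_le.1.trans hle, hw.abs_effect_le.2.trans hle⟩
  obtain ⟨e, ⟨r, γ, hγ, hγ0, hγn, rfl⟩, f, ⟨s, δ, hδ, hδ0, hδn, rfl⟩, α, β, hα, hβ, hpos⟩ :=
    exists_pos_combination (N := n * vassNorm V)
      (E := {v | ∃ r γ, Walk V S r γ r ∧ γ ≠ [] ∧ γ.length ≤ n ∧ effect γ = v})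
      (by rintro _ ⟨r, γ, hw, -, hlen, rfl⟩; exact hbound hw hlen)
      (by
        intro a b ha hb hab
        obtain ⟨r, γ, h1, h2, h3, h4⟩ := hL a b ha hb hab
        exact ⟨_, ⟨r, γ, h1, h2, h3, rfl⟩, h4⟩)
  obtain ⟨π₁, hπ₁, hl₁⟩ := hS.exists_short_walk hp (hγ.mem_of_ne_nil hγ0)
  obtain ⟨π₂, hπ₂, hl₂⟩ :=
    hS.exists_short_walk (hγ.mem_of_ne_nil hγ0) (hδ.mem_of_ne_nil hδ0)
  obtain ⟨π₃, hπ₃, hl₃⟩ := hS.exists_short_walk (hδ.mem_of_ne_nil hδ0) hp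
  have hb₁ := hbound hπ₁ hl₁
  have hb₂ := hbound hπ₂ hl₂
  have hb₃ := hbound hπ₃ hl₃
  have hnN : n ≤ n * vassNorm V := by
    refine Nat.le_mul_of_pos_right _ (Nat.pos_of_ne_zero fun h0 => ?_)
    obtain ⟨_, η, hη, -, hηn, hη1⟩ := hL 1 0 (by norm_num) le_rfl (by norm_num)
    have := (hbound hη hηn).1
    simp [h0] at this
    simp [this] at hη1
  generalize n * vassNorm V = N at *
  refine ⟨π₁ ++ ((List.replicate ((3 * N + 1) * α) γ).flatten ++
    (π₂ ++ ((List.replicate ((3 * N + 1) * β) δ).flatten ++ π₃))), ?_, ?_, ?_⟩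
  · exact hπ₁.append ((hγ.flatten_replicate _).append
      (hπ₂.append ((hδ.flatten_replicate _).append hπ₃)))
  · simp only [Pos, effect_append, effect_flatten_replicate, Prod.fst_add, Prod.snd_add,
      Prod.smul_fst, Prod.smul_snd] at hpos ⊢
    simp only [nsmul_eq_mul] at hpos ⊢
    simp only [abs_le] at hb₁ hb₂ hb₃
    push_cast
    have h1 := mul_le_mul_of_nonneg_left (Int.add_one_le_of_lt hpos.1)
      (show (0 : ℤ) ≤ 3 * N + 1 by positivity)
    have h2 := mul_le_mul_of_nonneg_left (Int.add_one_le_of_lt hpos.2)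
      (show (0 : ℤ) ≤ 3 * N + 1 by positivity)
    constructor <;> linarith
  · simp only [List.length_append, List.length_flatten, List.map_replicate,
      List.sum_replicate, smul_eq_mul]
    have h1 : (3 * N + 1) * α * γ.length ≤ (3 * N + 1) * (2 * N) * N := by
      gcongr
      omega
    have h2 : (3 * N + 1) * β * δ.length ≤ (3 * N + 1) * (2 * N) * N := by
      gcongr
      omega
    calc _ ≤ N + ((3 * N + 1) * (2 * N) * N + (N + ((3 * N + 1) * (2 * N) * N + N))) := by
          omega
      _ = _ := by ring

/-- SCC dichotomy.  There is a polynomial `q` with natural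
coefficients such that every SCC `S` of a 2-VASS `V` (with `n` states and norm
`M`) satisfies: (a) every state of `S` lies on a cycle within `S` with positive
effect and length at most `q(nM)`; or (b) there is a closed half-plane
containing no positive vector that contains the effects of all cycles
within `S`. -/
theorem scc_dichotomy :
    ∃ qp : Polynomial ℕ, ∀ (n : ℕ) (V : VASS n) (S : Set (Fin n)),
      IsSCC V S →
      (∀ p ∈ S, ∃ γ : List (Transition n),
          IsCycle V γ ∧ WithinS S γ ∧ (∃ t ∈ γ, t.1 = p) ∧
          Pos (effect γ) ∧ γ.length ≤ qp.eval (n * vassNorm V)) ∨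
      (∃ w : ℚ × ℚ, w ≠ 0 ∧
        (∀ x : ℚ × ℚ, 0 < x.1 → 0 < x.2 → ¬ (0 ≤ w.1 * x.1 + w.2 * x.2)) ∧
        (∀ γ : List (Transition n), IsCycle V γ → WithinS S γ →
          0 ≤ w.1 * ((effect γ).1 : ℚ) + w.2 * ((effect γ).2 : ℚ))) := by
  refine ⟨3 * Polynomial.X + 4 * Polynomial.X ^ 2 * (3 * Polynomial.X + 1), ?_⟩
  intro n V S hS
  by_cases hL : ∀ a b : ℤ, 0 ≤ a → 0 ≤ b → 0 < a + b →
      ∃ r γ, Walk V S r γ r ∧ γ ≠ [] ∧ γ.length ≤ n ∧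
        0 < a * (effect γ).1 + b * (effect γ).2
  · left
    intro p hp
    obtain ⟨γ, hw, hpos, hlen⟩ := hS.exists_pos_cycle hL hp
    have hγ : γ ≠ [] := by
      rintro rfl
      simp [Pos, effect] at hpos
    obtain ⟨hcyc, hin⟩ := isCycle_iff_exists_walk.2 ⟨hγ, p, hw⟩
    refine ⟨γ, hcyc, hin, ?_, hpos, ?_⟩
    · cases γ with
      | nil => exact absurd rfl hγ
      | cons t γ => exact ⟨t, List.mem_cons_self, hw.2.1⟩
    · simpa using hlen
  · right
    push Not at hL
    obtain ⟨a, b, ha, hb, hab, hle⟩ := hL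
    have haQ : (0 : ℚ) ≤ a := by exact_mod_cast ha
    have hbQ : (0 : ℚ) ≤ b := by exact_mod_cast hb
    have habQ : (0 : ℚ) < a + b := by exact_mod_cast hab
    refine ⟨(-a, -b), ?_, ?_, ?_⟩
    · intro h0
      simp only [Prod.mk_eq_zero, neg_eq_zero] at h0
      simp [h0.1, h0.2] at habQ
    · intro x hx1 hx2 h
      simp only at h
      rcases haQ.eq_or_lt with h0 | h0
      · rw [← h0] at h habQ
        nlinarith [mul_pos (show (0 : ℚ) < b by linarith) hx2]
      · nlinarith [mul_pos h0 hx1, mul_nonneg hbQ hx2.le]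
    · intro γ hcyc hin
      obtain ⟨-, p, hw⟩ := isCycle_iff_exists_walk.1 ⟨hcyc, hin⟩
      have h := hw.functional_effect_nonpos
        (a • AddMonoidHom.fst ℤ ℤ + b • AddMonoidHom.snd ℤ ℤ)
        (fun r γ h1 h2 h3 => by simpa using hle r γ h1 h2 h3)
      have h' : a * (effect γ).1 + b * (effect γ).2 ≤ 0 := by simpa using h
      have hQ : (a : ℚ) * (effect γ).1 + b * (effect γ).2 ≤ 0 := by exact_mod_cast h'
      simp only
      linarith
end

section
/- Thin runs do not change belts far from the origin: let V be a 2-VASS with n control states and norm M, let A ∈ ℕ, let τ be an A-thin run of V, and set W = A + √2·M, B = 6·W·A² + 3·W, and S = [0,B] × [0,B]. Then for any two consecutive configurations (q,w) and (q',w') of τ (i.e., related by a single transition of τ) with w ∉ S and w' ∉ S, there exists a single A-belt containing both w and w'. -/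
/-! ### Belts and thin runs -/

/-- Embedding of integer vectors into the Euclidean plane. -/
noncomputable def toE (v : Vec2) : EuclideanSpace ℝ (Fin 2) :=
  (WithLp.equiv 2 (Fin 2 → ℝ)).symm ![(v.1 : ℝ), (v.2 : ℝ)]

/-- The half-line `ℝ≥0 · v` in the Euclidean plane induced by `v`. -/
noncomputable def rayE (v : Vec2) : Set (EuclideanSpace ℝ (Fin 2)) :=
  {x | ∃ a : ℝ, 0 ≤ a ∧ x = a • toE v}

/-- The Euclidean distance from the point `u` to the half-line induced by `v`. -/
noncomputable def distToRay (u v : Vec2) : ℝ := Metric.infDist (toE u) (rayE v)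

/-- `u` belongs to the belt of direction `v` and width `W`:
`u` is nonnegative and its Euclidean distance to the half-line `ℓ_v` is at most `W`. -/
def InBelt (u : Vec2) (v : Vec2) (W : ℝ) : Prop :=
  (0 : Vec2) ≤ u ∧ distToRay u v ≤ W

/-- A run (given by its path `π` and source counter values `u`) is `A`-thin if
each of its configurations lies in some `A`-belt, i.e. a belt whose direction
has norm at most `A` and whose width is at most `A`. -/
def IsThin {n : ℕ} (A : ℕ) (π : List (Transition n)) (u : Vec2) : Prop :=
  ∀ i ≤ π.length, ∃ v : Vec2, (0 : Vec2) ≤ v ∧ vnorm v ≤ A ∧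
    ∃ W : ℝ, W ≤ (A : ℝ) ∧ InBelt (vecAt π u i) v W

/-- The counter values `u` lie in the square `[0, B] × [0, B]` (viewed in ℝ). -/
def InSquare (B : ℝ) (u : Vec2) : Prop :=
  0 ≤ (u.1 : ℝ) ∧ (u.1 : ℝ) ≤ B ∧ 0 ≤ (u.2 : ℝ) ∧ (u.2 : ℝ) ≤ B

/-- A vector whose distance to a half-line is at most `W` is coordinatewise within `W + ε` of
some point of that half-line. -/
lemma InBelt.exists_near {u v : Vec2} {W : ℝ} (h : InBelt u v W) {ε : ℝ} (hε : 0 < ε) :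
    ∃ a : ℝ, |(u.1 : ℝ) - a * v.1| ≤ W + ε ∧ |(u.2 : ℝ) - a * v.2| ≤ W + ε := by
  have hne : (rayE v).Nonempty := ⟨0, 0, le_rfl, by simp⟩
  have hlt : Metric.infDist (toE u) (rayE v) < W + ε := lt_of_le_of_lt h.2 (by linarith)
  obtain ⟨y, ⟨a, -, rfl⟩, hd⟩ := (Metric.infDist_lt_iff hne).1 hlt
  rw [dist_eq_norm] at hd
  have hcoord (i : Fin 2) : ‖(toE u - a • toE v) i‖ ≤ W + ε :=
    (PiLp.norm_apply_le _ i).trans hd.le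
  exact ⟨a, by simpa [toE] using hcoord 0, by simpa [toE] using hcoord 1⟩

/-- The belt around the degenerate half-line `{0}` is contained in a square. -/
lemma InBelt.inSquare_of_zero {u : Vec2} {W B : ℝ} (h : InBelt u 0 W) (hWB : W ≤ B) :
    InSquare B u := by
  have hu1 : (u.1 : ℝ) ≤ W := le_of_forall_pos_le_add fun ε hε => by
    obtain ⟨a, h1, -⟩ := h.exists_near hε
    simpa using (le_abs_self _).trans h1
  have hu2 : (u.2 : ℝ) ≤ W := le_of_forall_pos_le_add fun ε hε => by
    obtain ⟨a, -, h2⟩ := h.exists_near hε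
    simpa using (le_abs_self _).trans h2
  exact ⟨by exact_mod_cast h.1.1, hu1.trans hWB, by exact_mod_cast h.1.2, hu2.trans hWB⟩

/-- Nonnegative nonzero vectors with vanishing determinant generate the same half-line. -/
lemma rayE_eq_of_det_eq_zero {v w : Vec2} (hv : 0 ≤ v) (hw : 0 ≤ w) (hv0 : v ≠ 0) (hw0 : w ≠ 0)
    (hdet : v.1 * w.2 - v.2 * w.1 = 0) : rayE v = rayE w := by
  have hsum {x : Vec2} (hx : 0 ≤ x) (hx0 : x ≠ 0) : (0 : ℝ) < x.1 + x.2 := by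
    have h1 : 0 ≤ x.1 := hx.1
    have h2 : 0 ≤ x.2 := hx.2
    have : 0 < x.1 + x.2 := by
      by_contra hcon
      exact hx0 (Prod.ext (by simp; omega) (by simp; omega))
    exact_mod_cast this
  have hsub {x y : Vec2} (hx : (0 : ℝ) < x.1 + x.2) (hy : (0 : ℝ) < y.1 + y.2)
      (hd : (x.1 : ℝ) * y.2 = x.2 * y.1) : rayE x ⊆ rayE y := by
    rintro _ ⟨a, ha, rfl⟩
    refine ⟨a * ((x.1 + x.2) / (y.1 + y.2)), by positivity, ?_⟩
    ext i
    fin_cases i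
    · simp only [toE]
      simp
      field_simp
      linear_combination a * hd
    · simp only [toE]
      simp
      field_simp
      linear_combination -a * hd
  have hd : (v.1 : ℝ) * w.2 = v.2 * w.1 := by exact_mod_cast sub_eq_zero.1 hdet
  exact Set.Subset.antisymm (hsub (hsum hv hv0) (hsum hw hw0) hd)
    (hsub (hsum hw hw0) (hsum hv hv0) (by linear_combination -hd))

/-- The determinant of `v` with a vector close to the line through `v` is small. -/
lemma abs_det_le_of_near {v₁ v₂ x₁ x₂ a A D : ℝ} (hv₁ : |v₁| ≤ A) (hv₂ : |v₂| ≤ A)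
    (h₁ : |x₁ - a * v₁| ≤ D) (h₂ : |x₂ - a * v₂| ≤ D) : |v₁ * x₂ - v₂ * x₁| ≤ 2 * A * D := by
  have hA : 0 ≤ A := (abs_nonneg _).trans hv₁
  have hle₁ : |v₁ * (x₂ - a * v₂)| ≤ A * D := by
    rw [abs_mul]; exact mul_le_mul hv₁ h₂ (abs_nonneg _) hA
  have hle₂ : |v₂ * (x₁ - a * v₁)| ≤ A * D := by
    rw [abs_mul]; exact mul_le_mul hv₂ h₁ (abs_nonneg _) hA
  calc |v₁ * x₂ - v₂ * x₁| = |v₁ * (x₂ - a * v₂) - v₂ * (x₁ - a * v₁)| := by ring_nf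
    _ ≤ |v₁ * (x₂ - a * v₂)| + |v₂ * (x₁ - a * v₁)| := abs_sub _ _
    _ ≤ 2 * A * D := by linarith

/-- Cramer's rule bound: a coordinate `x` of a vector with determinants `p`, `r` against two
integer vectors of nonzero determinant `d` is bounded. -/
lemma le_of_cramer {d : ℤ} {x p r s t A E : ℝ} (hd : d ≠ 0) (hx : 0 ≤ x)
    (h : d * x = r * t - p * s) (hp : |p| ≤ E) (hr : |r| ≤ E) (hs : |s| ≤ A) (ht : |t| ≤ A) :
    x ≤ 2 * E * A := by
  have hd1 : (1 : ℝ) ≤ |(d : ℝ)| := by exact_mod_cast Int.one_le_abs hd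
  have hE : 0 ≤ E := (abs_nonneg _).trans hp
  have hps : |p * s| ≤ E * A := by rw [abs_mul]; exact mul_le_mul hp hs (abs_nonneg _) hE
  have hrt : |r * t| ≤ E * A := by rw [abs_mul]; exact mul_le_mul hr ht (abs_nonneg _) hE
  calc x ≤ |(d : ℝ)| * x := le_mul_of_one_le_left hx hd1
    _ = |r * t - p * s| := by rw [← h, abs_mul, abs_of_nonneg hx]
    _ ≤ |r * t| + |p * s| := abs_sub _ _
    _ ≤ 2 * E * A := by linarith

lemma abs_fst_le_of_vnorm_le {v : Vec2} {A : ℕ} (h : vnorm v ≤ A) : |(v.1 : ℝ)| ≤ A := by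
  have : v.1.natAbs ≤ A := (le_max_left _ _).trans h
  rw [← Int.cast_abs, Int.abs_eq_natAbs]
  exact_mod_cast this

lemma abs_snd_le_of_vnorm_le {v : Vec2} {A : ℕ} (h : vnorm v ≤ A) : |(v.2 : ℝ)| ≤ A := by
  have : v.2.natAbs ≤ A := (le_max_right _ _).trans h
  rw [← Int.cast_abs, Int.abs_eq_natAbs]
  exact_mod_cast this

/-- Consecutive counter values of a path of `V` differ by a vector of norm at most `‖V‖`. -/
lemma IsPath.exists_step {n : ℕ} {V : VASS n} {π : List (Transition n)} (h : IsPath V π)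
    (u : Vec2) {i : ℕ} (hi : i < π.length) :
    ∃ e : Vec2, vnorm e ≤ vassNorm V ∧ vecAt π u (i + 1) = vecAt π u i + e := by
  refine ⟨π[i].2.1, Finset.le_sup (f := fun t : Transition n => vnorm t.2.1)
    (h.1 _ (List.getElem_mem hi)), ?_⟩
  simp only [vecAt, effect, ← List.take_concat_get' π i hi, List.map_append, List.sum_append,
    List.map_cons, List.map_nil, List.sum_singleton, add_assoc]

/-- Thin runs do not change belts far from the origin: for
an `A`-thin run of a 2-VASS `V` with norm `M`, setting `W = A + √2·M`,
`B = 6·W·A² + 3·W` and `S = [0,B]²`, any two consecutive configurations whose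
counter values lie outside `S` share a common `A`-belt. -/
theorem thin_run_belts_stable
    (n : ℕ) (V : VASS n) (π : List (Transition n)) (q : Fin n) (u : Vec2) (A : ℕ)
    (W B : ℝ)
    (hW : W = (A : ℝ) + Real.sqrt 2 * (vassNorm V : ℝ))
    (hB : B = 6 * W * (A : ℝ) ^ 2 + 3 * W)
    (hrun : IsRun V π q u) (hthin : IsThin A π u) :
    ∀ i : ℕ, i + 1 ≤ π.length →
      ¬ InSquare B (vecAt π u i) → ¬ InSquare B (vecAt π u (i + 1)) →
      ∃ v : Vec2, (0 : Vec2) ≤ v ∧ vnorm v ≤ A ∧ ∃ W' : ℝ, W' ≤ (A : ℝ) ∧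
        InBelt (vecAt π u i) v W' ∧ InBelt (vecAt π u (i + 1)) v W' := by
  intro i hi hw hw'
  obtain ⟨v, hv, hvA, W₁, hW₁, hb⟩ := hthin i (by omega)
  obtain ⟨v', hv', hvA', W₂, hW₂, hb'⟩ := hthin (i + 1) hi
  obtain ⟨e, heM, he⟩ := hrun.1.exists_step u (Nat.lt_of_succ_le hi)
  generalize vecAt π u i = x at *
  generalize vecAt π u (i + 1) = y at *
  have hMW : (A : ℝ) + vassNorm V ≤ W := by
    rw [hW]
    have hsqrt : (1 : ℝ) ≤ Real.sqrt 2 := Real.one_le_sqrt.2 (by norm_num)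
    have := le_mul_of_one_le_left (Nat.cast_nonneg (α := ℝ) (vassNorm V)) hsqrt
    linarith
  have hM0 : (0 : ℝ) ≤ vassNorm V := Nat.cast_nonneg _
  have hA0 : (0 : ℝ) ≤ A := Nat.cast_nonneg _
  have hW0 : 0 ≤ W := by linarith
  have hAB : (A : ℝ) ≤ B := by
    have : 0 ≤ W * (A : ℝ) ^ 2 := by positivity
    linarith
  have hv0 : v ≠ 0 := by
    rintro rfl
    exact hw (hb.inSquare_of_zero (hW₁.trans hAB))
  have hv0' : v' ≠ 0 := by
    rintro rfl
    exact hw' (hb'.inSquare_of_zero (hW₂.trans hAB))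
  by_cases hdet : v.1 * v'.2 - v.2 * v'.1 = 0
  · refine ⟨v, hv, hvA, A, le_rfl, ⟨hb.1, hb.2.trans hW₁⟩, hb'.1, ?_⟩
    rw [distToRay, rayE_eq_of_det_eq_zero hv hv' hv0 hv0' hdet]
    exact hb'.2.trans hW₂
  · refine absurd ?_ hw'
    have hA1 : (1 : ℝ) ≤ A := by
      rcases Nat.eq_zero_or_pos A with rfl | hpos
      · have hz : max v.1.natAbs v.2.natAbs ≤ 0 := hvA
        exact absurd (Prod.ext (by simp; omega) (by simp; omega)) hv0
      · exact_mod_cast hpos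
    obtain ⟨a, ha1, ha2⟩ := hb.exists_near (ε := 1 / 4) (by norm_num)
    obtain ⟨b, hb1, hb2⟩ := hb'.exists_near (ε := 1 / 4) (by norm_num)
    have he1 := abs_le.1 (abs_fst_le_of_vnorm_le heM)
    have he2 := abs_le.1 (abs_snd_le_of_vnorm_le heM)
    have hv1 := abs_fst_le_of_vnorm_le hvA
    have hv2 := abs_snd_le_of_vnorm_le hvA
    have hv1' := abs_fst_le_of_vnorm_le hvA'
    have hv2' := abs_snd_le_of_vnorm_le hvA'
    have hy1 : (y.1 : ℝ) = x.1 + e.1 := by rw [he]; simp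
    have hy2 : (y.2 : ℝ) = x.2 + e.2 := by rw [he]; simp
    have hp : |(v.1 : ℝ) * y.2 - v.2 * y.1| ≤ 2 * A * (5 / 4 * W) := by
      refine abs_det_le_of_near (a := a) hv1 hv2 (abs_le.2 ?_) (abs_le.2 ?_)
      · have := abs_le.1 ha1
        constructor <;> linarith
      · have := abs_le.1 ha2
        constructor <;> linarith
    have hr : |(v'.1 : ℝ) * y.2 - v'.2 * y.1| ≤ 2 * A * (5 / 4 * W) :=
      abs_det_le_of_near (a := b) hv1' hv2' (by linarith) (by linarith)
    have hy10 : (0 : ℝ) ≤ y.1 := by exact_mod_cast hb'.1.1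
    have hy20 : (0 : ℝ) ≤ y.2 := by exact_mod_cast hb'.1.2
    have hB5 : 2 * (2 * A * (5 / 4 * W)) * A ≤ B := by
      have : 0 ≤ W * (A : ℝ) ^ 2 := by positivity
      rw [hB]
      linarith
    refine ⟨hy10, (le_of_cramer hdet hy10 ?_ hr hp hv1 hv1').trans hB5, hy20,
      (le_of_cramer hdet hy20 ?_ hr hp hv2 hv2').trans hB5⟩
    · push_cast
      ring
    · push_cast
      ring
end
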